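/- arXiv:2403.10679 — 4 statements merged into one kernel-verified Lean document; each statement's English description precedes it below -/
import Mathlib

section
/- Let N be a nonempty compact topological space, let a ≤ b be real numbers, and let g : [a,b] × N → ℝ be continuous. Then the following two conditions are equivalent: (1) ∫_a^b max_{x ∈ N} |g(t,x)| dt = max_{x ∈ N} |∫_a^b g(t,x) dt|; (2) there exist ε ∈ {+1, −1} and a point x₀ ∈ N such that for every t ∈ [a,b] one has ε · g(t,x₀) = max_{x ∈ N} |g(t,x)|. -/
/-!
For `f` continuous on `ℝ × N`, write `M t = max_x |f (t,x)|`.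
Always `|∫ f (t,x) dt| ≤ ∫ M` for each `x`, because `|f (t,x)| ≤ M t`.
If the maximum of `x ↦ |∫ f (t,x) dt|` equals `∫ M`, take `x₀` attaining it (the integral depends
continuously on `x`, and `N` is compact) and a sign `ε` with `ε * ∫ f (t,x₀) dt = ∫ M`. Then
`t ↦ ε * f (t,x₀)` is a continuous function bounded above by the continuous function `M` and having
the same integral, so the two agree on `[a,b]` when `a < b`; when `a = b`, it suffices that the
maximum at the single time `a` is attained. Conversely, `ε * f (t,x₀) = M t` integrates to
`∫ M ≤ |∫ f (t,x₀) dt|`.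

To reduce to such an `f`, the map `g` is extended by precomposing the time
variable with the projection `ℝ → [a,b]`.
-/

lemma exists_sign_mul_eq_abs (r : ℝ) : ∃ ε ∈ ({1, -1} : Set ℝ), ε * r = |r| := by
  rcases abs_choice r with h | h
  · exact ⟨1, by simp, by simp [h]⟩
  · exact ⟨-1, by simp, by simp [h]⟩

lemma exists_eq_ciSup_of_continuous {N : Type*} [TopologicalSpace N] [CompactSpace N] [Nonempty N]
    {h : N → ℝ} (hh : Continuous h) : ∃ x₀, h x₀ = ⨆ x, h x := by
  obtain ⟨x₀, -, hx₀⟩ := isCompact_univ.exists_isMaxOn Set.univ_nonempty hh.continuousOn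
  refine ⟨x₀, le_antisymm (le_ciSup (isCompact_range hh).bddAbove x₀) (ciSup_le fun x => ?_)⟩
  exact hx₀ (Set.mem_univ x)

/-- The equivalence for a function continuous on all of `ℝ × N`. -/
lemma integral_iSup_abs_eq_iff {N : Type*} [TopologicalSpace N] [CompactSpace N] [Nonempty N]
    {a b : ℝ} (hab : a ≤ b) {f : ℝ × N → ℝ} (hf : Continuous f) :
    (∫ t in a..b, ⨆ x : N, |f (t, x)|) = (⨆ x : N, |∫ t in a..b, f (t, x)|) ↔
      ∃ ε ∈ ({1, -1} : Set ℝ), ∃ x₀ : N, ∀ t ∈ Set.Icc a b,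
        ε * f (t, x₀) = ⨆ x : N, |f (t, x)| := by
  have hM : Continuous fun t => ⨆ x : N, |f (t, x)| := by
    have h := isCompact_univ.continuous_sSup (K := (Set.univ : Set N))
      (f := fun t x => |f (t, x)|) hf.abs
    simpa only [Set.image_univ, sSup_range] using h
  have hx (t : ℝ) : Continuous fun x : N => |f (t, x)| := by fun_prop
  have ht (x : N) : Continuous fun t : ℝ => f (t, x) := by fun_prop
  have hle (t : ℝ) (x : N) : |f (t, x)| ≤ ⨆ x : N, |f (t, x)| :=
    le_ciSup (isCompact_range (hx t)).bddAbove x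
  have hI : Continuous fun x : N => |∫ t in a..b, f (t, x)| :=
    (intervalIntegral.continuous_parametric_intervalIntegral_of_continuous'
      (f := fun x t => f (t, x)) (hf.comp continuous_swap) a b).abs
  constructor
  · intro h
    rcases hab.eq_or_lt with rfl | hlt
    · obtain ⟨x₀, hx₀⟩ := exists_eq_ciSup_of_continuous (hx a)
      obtain ⟨ε, hε, hεx⟩ := exists_sign_mul_eq_abs (f (a, x₀))
      refine ⟨ε, hε, x₀, fun t ht => ?_⟩
      obtain rfl : t = a := le_antisymm ht.2 ht.1
      rw [hεx, hx₀]
    · obtain ⟨x₀, hx₀⟩ := exists_eq_ciSup_of_continuous hI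
      obtain ⟨ε, hε, hεx⟩ := exists_sign_mul_eq_abs (∫ t in a..b, f (t, x₀))
      have hεle (t : ℝ) : ε * f (t, x₀) ≤ ⨆ x : N, |f (t, x)| := by
        refine le_trans ?_ (hle t x₀)
        rcases hε with rfl | rfl
        · simpa using le_abs_self _
        · simpa using neg_le_abs _
      refine ⟨ε, hε, x₀, fun t htab => ?_⟩
      by_contra hne
      have := intervalIntegral.integral_lt_integral_of_continuousOn_of_le_of_exists_lt hlt
        ((ht x₀).const_mul ε).continuousOn hM.continuousOn (fun s _ => hεle s)
        ⟨t, htab, lt_of_le_of_ne (hεle t) hne⟩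
      rw [intervalIntegral.integral_const_mul, hεx, hx₀, h] at this
      exact lt_irrefl _ this
  · rintro ⟨ε, hε, x₀, h⟩
    apply le_antisymm
    · calc (∫ t in a..b, ⨆ x : N, |f (t, x)|) = ∫ t in a..b, ε * f (t, x₀) :=
            intervalIntegral.integral_congr fun t ht => (h t (Set.uIcc_of_le hab ▸ ht)).symm
        _ = ε * ∫ t in a..b, f (t, x₀) := intervalIntegral.integral_const_mul _ _
        _ ≤ |∫ t in a..b, f (t, x₀)| := by
            rcases hε with rfl | rfl
            · simpa using le_abs_self _
            · simpa using neg_le_abs _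
        _ ≤ _ := le_ciSup (f := fun x => |∫ t in a..b, f (t, x)|)
            (isCompact_range hI).bddAbove x₀
    · refine ciSup_le fun x => (intervalIntegral.abs_integral_le_integral_abs hab).trans ?_
      exact intervalIntegral.integral_mono_on hab ((ht x).abs.intervalIntegrable _ _)
        (hM.intervalIntegrable _ _) fun t _ => hle t x

/-- Lemma 4.1 (Allais–Arlove): for a continuous map `g : [a,b] × N → ℝ` on a nonempty
compact space `N`, the equality `∫ₐᵇ max_x |g (t,x)| dt = max_x |∫ₐᵇ g (t,x) dt|` holds
if and only if there are `ε ∈ {1,-1}` and `x₀ ∈ N` with `ε * g (t,x₀) = max_x |g (t,x)|`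
for all `t ∈ [a,b]`. -/
theorem stmt0 {N : Type*} [TopologicalSpace N] [CompactSpace N] [Nonempty N]
    (a b : ℝ) (hab : a ≤ b) (g : ℝ × N → ℝ)
    (hg : ContinuousOn g (Set.Icc a b ×ˢ (Set.univ : Set N))) :
    (∫ t in a..b, ⨆ x : N, |g (t, x)|) = (⨆ x : N, |∫ t in a..b, g (t, x)|) ↔
      ∃ ε ∈ ({1, -1} : Set ℝ), ∃ x₀ : N, ∀ t ∈ Set.Icc a b,
        ε * g (t, x₀) = ⨆ x : N, |g (t, x)| := by
  have hf : Continuous fun p : ℝ × N => g (Set.projIcc a b hab p.1, p.2) :=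
    hg.comp_continuous (by fun_prop) fun p => ⟨(Set.projIcc a b hab p.1).2, Set.mem_univ _⟩
  have hfg : ∀ t ∈ Set.Icc a b, ∀ x, g (Set.projIcc a b hab t, x) = g (t, x) := fun t ht x => by
    rw [Set.projIcc_of_mem hab ht]
  have key := integral_iSup_abs_eq_iff hab hf
  have h₁ : (∫ t in a..b, ⨆ x : N, |g (Set.projIcc a b hab t, x)|) =
      ∫ t in a..b, ⨆ x : N, |g (t, x)| :=
    intervalIntegral.integral_congr fun t ht => by
      simp only [hfg t (Set.uIcc_of_le hab ▸ ht)]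
  have h₂ (x : N) : (∫ t in a..b, g (Set.projIcc a b hab t, x)) = ∫ t in a..b, g (t, x) :=
    intervalIntegral.integral_congr fun t ht => hfg t (Set.uIcc_of_le hab ▸ ht) x
  simp only [h₁, h₂] at key
  rw [key]
  refine exists_congr fun ε => and_congr_right fun _ => exists_congr fun x₀ =>
    forall₂_congr fun t ht => ?_
  simp only [hfg t ht]
end

section
/- Let N be a nonempty compact topological space and let f : ℝ × N → ℝ be a continuous function such that the partial derivative ∂_t f(t,x) exists for all (t,x) and is jointly continuous. Then ∫_0^1 max_{x ∈ N} |∂_t f(t,x)| dt = max_{x ∈ N} |f(1,x) − f(0,x)| holds if and only if there exist ε ∈ {+1, −1} and a point x₀ ∈ N such that ε · ∂_t f(t,x₀) = max_{x ∈ N} |∂_t f(t,x)| for every t ∈ [0,1]. -/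
/-!
Write `M t = ⨆ x, |g (t, x)|`. By compactness of `N` the supremum is attained and `M` is
continuous. For `ε = ± 1` and `x : N`, the fundamental theorem of calculus gives
`∫₀¹ (M t - ε * g (t, x)) dt = ∫₀¹ M - ε * (f (1, x) - f (0, x))`, where the integrand is
continuous and nonnegative. Hence `∫₀¹ M` is an upper bound of all `|f (1, x) - f (0, x)|`, and
equality `∫₀¹ M = ε * (f (1, x) - f (0, x))` holds iff `ε * g (t, x) = M t` on all of `[0, 1]`.
Applying this at a maximum point of `|f (1, x) - f (0, x)|`, with `ε` its sign, gives one
implication; the other follows because the bound is then attained.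
-/

theorem stmt2 {N : Type*} [TopologicalSpace N] [CompactSpace N] [Nonempty N]
    (f g : ℝ × N → ℝ) (hf : Continuous f) (hg : Continuous g)
    (hderiv : ∀ (t : ℝ) (x : N), HasDerivAt (fun s => f (s, x)) (g (t, x)) t) :
    (∫ t in (0:ℝ)..1, ⨆ x : N, |g (t, x)|) = (⨆ x : N, |f (1, x) - f (0, x)|) ↔
      ∃ ε ∈ ({1, -1} : Set ℝ), ∃ x₀ : N, ∀ t ∈ Set.Icc (0:ℝ) 1,
        ε * g (t, x₀) = ⨆ x : N, |g (t, x)| := by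
  have hMc : Continuous fun t : ℝ => ⨆ x : N, |g (t, x)| := by
    have h := isCompact_univ.continuous_sSup (K := (Set.univ : Set N))
      (f := fun (t : ℝ) (x : N) => |g (t, x)|) (by simpa [Function.HasUncurry.uncurry] using hg.abs)
    simpa [Set.image_univ, sSup_range] using h
  have hgM (t : ℝ) (x : N) : |g (t, x)| ≤ ⨆ x : N, |g (t, x)| :=
    le_ciSup (f := fun x : N => |g (t, x)|)
      (isCompact_range (by fun_prop)).bddAbove x
  have hdc : Continuous fun x : N => |f (1, x) - f (0, x)| := by fun_prop
  have hdb : BddAbove (Set.range fun x : N => |f (1, x) - f (0, x)|) :=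
    (isCompact_range hdc).bddAbove
  set M : ℝ → ℝ := fun t => ⨆ x : N, |g (t, x)| with hM
  have hle (ε : ℝ) (hε : ε ∈ ({1, -1} : Set ℝ)) (t : ℝ) (x : N) : ε * g (t, x) ≤ M t := by
    rcases hε with rfl | rfl
    · simpa using (le_abs_self _).trans (hgM t x)
    · simpa using (neg_le_abs _).trans (hgM t x)
  have hgx (x : N) : Continuous fun t : ℝ => g (t, x) := by fun_prop
  have hint (ε : ℝ) (x : N) :
      ∫ t in (0:ℝ)..1, (M t - ε * g (t, x)) =
        (∫ t in (0:ℝ)..1, M t) - ε * (f (1, x) - f (0, x)) := by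
    rw [intervalIntegral.integral_sub (hMc.intervalIntegrable _ _)
      (((hgx x).const_mul ε).intervalIntegrable _ _), intervalIntegral.integral_const_mul,
      intervalIntegral.integral_eq_sub_of_hasDerivAt (fun t _ => hderiv t x)
        ((hgx x).intervalIntegrable _ _)]
  have hsign (a : ℝ) : ∃ ε ∈ ({1, -1} : Set ℝ), ε * a = |a| := by
    rcases abs_choice a with h | h
    · exact ⟨1, by simp, by simp [h]⟩
    · exact ⟨-1, by simp, by simp [h]⟩
  constructor
  · intro h
    obtain ⟨x₀, hx₀⟩ := (isCompact_range hdc).sSup_mem (Set.range_nonempty _)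
    change |f (1, x₀) - f (0, x₀)| = ⨆ x : N, |f (1, x) - f (0, x)| at hx₀
    obtain ⟨ε, hε, hεx⟩ := hsign (f (1, x₀) - f (0, x₀))
    refine ⟨ε, hε, x₀, fun t ht => ?_⟩
    by_contra hne
    -- A continuous nonnegative integrand that is positive somewhere has positive integral.
    have hpos : 0 < ∫ t in (0:ℝ)..1, (M t - ε * g (t, x₀)) :=
      intervalIntegral.integral_pos one_pos (hMc.sub ((hgx x₀).const_mul ε)).continuousOn
        (fun s _ => sub_nonneg.2 (hle ε hε s x₀))
        ⟨t, ht, sub_pos.2 (lt_of_le_of_ne (hle ε hε t x₀) hne)⟩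
    rw [hint, h, hεx, ← hx₀, sub_self] at hpos
    exact lt_irrefl _ hpos
  · rintro ⟨ε, hε, x₀, h⟩
    apply le_antisymm
    · have hzero : ∫ t in (0:ℝ)..1, (M t - ε * g (t, x₀)) = 0 := by
        rw [intervalIntegral.integral_congr (g := fun _ => (0:ℝ)), intervalIntegral.integral_zero]
        intro t ht
        rw [Set.uIcc_of_le zero_le_one] at ht
        exact sub_eq_zero.2 (h t ht).symm
      rw [hint, sub_eq_zero] at hzero
      rw [hzero]
      refine le_trans ?_ (le_ciSup hdb x₀)
      rcases hε with rfl | rfl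
      · simpa using le_abs_self (f (1, x₀) - f (0, x₀))
      · simpa only [neg_one_mul] using neg_le_abs (f (1, x₀) - f (0, x₀))
    · refine ciSup_le fun x => ?_
      obtain ⟨δ, hδ, hδx⟩ := hsign (f (1, x) - f (0, x))
      have hnonneg : 0 ≤ ∫ t in (0:ℝ)..1, (M t - δ * g (t, x)) :=
        intervalIntegral.integral_nonneg zero_le_one
          (fun t _ => sub_nonneg.2 (hle δ hδ t x))
      rw [hint, hδx] at hnonneg
      exact sub_nonneg.1 hnonneg
end

section
/- Let E be a real normed vector space, let f : ℝ × E → ℝ be twice continuously differentiable, and write g(t,x) for the derivative at t of the map s ↦ f(s,x). Let x₀ ∈ E be such that for every t ∈ [0,1] the point x₀ is a local maximum of the map x ↦ g(t,x). Then the map t ↦ D_x f(t,·)(x₀) is constant on [0,1]; that is, for every t ∈ [0,1] the Fréchet derivative of x ↦ f(t,x) at x₀ equals the Fréchet derivative of x ↦ f(0,x) at x₀. -/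
/-!
The slice derivative `D_x f(t,·)(x₀)` is `Df(t, x₀)` restricted to `{0} × E`, so its derivative in
`t` is `v ↦ D²f(t, x₀)(1, 0)(0, v)`. By symmetry of `D²f` this equals `D²f(t, x₀)(0, v)(1, 0)`,
the derivative at `x₀` in the direction `v` of `g t = Df(t, ·)(1, 0)`, which vanishes by Fermat's
theorem. A map on `[0,1]` with zero derivative is constant.
-/

/-- Argument in the proof of Lemma 4.2 (Allais–Arlove): if `f : ℝ × E → ℝ` is `C²`,
`g t x` is the time-derivative of `f` at `(t,x)`, and `x₀` is a local maximum of
`g t` for every `t ∈ [0,1]`, then the spatial Fréchet derivative `D_x f(t,·)(x₀)`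
is constant in `t` on `[0,1]`. -/
theorem stmt3 {E : Type*} [NormedAddCommGroup E] [NormedSpace ℝ E]
    (f : ℝ × E → ℝ) (hf : ContDiff ℝ 2 f)
    (g : ℝ → E → ℝ)
    (hg : ∀ (t : ℝ) (x : E), HasDerivAt (fun s => f (s, x)) (g t x) t)
    (x₀ : E) (hmax : ∀ t ∈ Set.Icc (0:ℝ) 1, IsLocalMax (g t) x₀) :
    ∀ t ∈ Set.Icc (0:ℝ) 1,
      fderiv ℝ (fun x => f (t, x)) x₀ = fderiv ℝ (fun x => f (0, x)) x₀ := by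
  have hD : ∀ p, HasFDerivAt f (fderiv ℝ f p) p := fun p =>
    (hf.differentiable (by norm_num) p).hasFDerivAt
  have hD2 : ∀ p, HasFDerivAt (fderiv ℝ f) (fderiv ℝ (fderiv ℝ f) p) p := fun p =>
    ((hf.fderiv_right (m := 1) (by norm_num)).differentiable (by norm_num) p).hasFDerivAt
  have hspace : ∀ t, fderiv ℝ (fun x => f (t, x)) x₀
      = (fderiv ℝ f (t, x₀)).comp (ContinuousLinearMap.inr ℝ ℝ E) := fun t =>
    ((hD (t, x₀)).comp x₀ (hasFDerivAt_prodMk_right t x₀)).fderiv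
  have hpath : ∀ (t : ℝ) (x : E), HasDerivAt (fun s : ℝ => (s, x)) ((1 : ℝ), (0 : E)) t :=
    fun t x => (hasDerivAt_id t).prodMk (hasDerivAt_const t x)
  have hgD : ∀ t x, g t x = fderiv ℝ f (t, x) (1, 0) := fun t x =>
    (hg t x).unique ((hD (t, x)).comp_hasDerivAt t (hpath t x))
  -- Fermat's theorem for `g t`, with the derivative of `g t` written through `D²f`.
  have hfermat : ∀ t ∈ Set.Icc (0:ℝ) 1, ∀ v : E,
      fderiv ℝ (fderiv ℝ f) (t, x₀) (0, v) (1, 0) = 0 := by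
    intro t ht v
    have hgt : HasFDerivAt (g t) _ x₀ :=
      (((hD2 (t, x₀)).comp x₀ (hasFDerivAt_prodMk_right t x₀)).clm_apply
        (hasFDerivAt_const ((1 : ℝ), (0 : E)) x₀)).congr_of_eventuallyEq
        (Filter.Eventually.of_forall (hgD t))
    simpa using congrArg (fun L : E →L[ℝ] ℝ => L v) ((hmax t ht).hasFDerivAt_eq_zero hgt)
  have hderiv : ∀ t, HasDerivAt
      (fun s => (fderiv ℝ f (s, x₀)).comp (ContinuousLinearMap.inr ℝ ℝ E))
      ((fderiv ℝ (fderiv ℝ f) (t, x₀) (1, 0)).comp (ContinuousLinearMap.inr ℝ ℝ E)) t := by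
    intro t
    have hpre : HasDerivAt (fun s => fderiv ℝ f (s, x₀))
        (fderiv ℝ (fderiv ℝ f) (t, x₀) (1, 0)) t :=
      (hD2 (t, x₀)).comp_hasDerivAt t (hpath t x₀)
    -- Precomposition with `inr` is a continuous linear map, so it commutes with `d/dt`.
    exact ((ContinuousLinearMap.compL ℝ E (ℝ × E) ℝ).flip
      (ContinuousLinearMap.inr ℝ ℝ E)).hasFDerivAt.comp_hasDerivAt t hpre
  simp only [hspace]
  refine constant_of_has_deriv_right_zero
    (fun t _ => (hderiv t).continuousAt.continuousWithinAt) fun t ht => ?_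
  have hzero : (fderiv ℝ (fderiv ℝ f) (t, x₀) (1, 0)).comp
      (ContinuousLinearMap.inr ℝ ℝ E) = 0 := by
    ext v
    have hsymm := second_derivative_symmetric hD (hD2 (t, x₀)) (1, 0) (0, v)
    simpa using hsymm.trans (hfermat t ⟨ht.1, ht.2.le⟩ v)
  exact hzero ▸ (hderiv t).hasDerivWithinAt
end

section
/- Let n be a natural number, let ε > 0 and let c be a real number with ε² ≤ c. Then there exists a smooth function ρ : ℝⁿ → ℝ with 0 ≤ ρ(x) ≤ 1 for all x, with support contained in the closed ball of radius ε centered at 0, and with ρ(0) = 1, such that the function g(x) := ρ(x)·(c − ‖x‖²) satisfies: every critical value of g belongs to {0, c}; moreover 0 is a critical point of g with g(0) = c. -/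
/-!
The cut-off is `ρ x = φ (ε² - ‖x‖²) / φ (ε²)`, where `φ` is Mathlib's `expNegInvGlue`: smooth,
nondecreasing, zero on `(-∞, 0]` and positive on `(0, ∞)`. Then `g x = H (‖x‖²)` with
`H u = φ (ε² - u) / φ (ε²) * (c - u)`. For `u < ε²` both factors of `H` are positive
(as `ε² ≤ c`), the first is nonincreasing and the second has derivative `-1`, so `H' u < 0`.
Since the derivative of `g` at `x` is `2 H'(‖x‖²) ⟪x, ·⟫`, evaluating it on `x` shows that a
critical point with `‖x‖ < ε` is the origin, where `g = c`; outside that ball `g` vanishes.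
-/

/-- Cut-off construction in the proof of Theorem 1.1 (Allais–Arlove): given `ε > 0` and
`c ≥ ε²`, there is a smooth `ρ : ℝⁿ → ℝ` with values in `[0,1]`, supported in the closed
ball of radius `ε`, with `ρ 0 = 1`, such that every critical value of
`g x = ρ x * (c - ‖x‖²)` lies in `{0, c}`, and `0` is a critical point of `g` with
`g 0 = c`. -/
theorem stmt6 (n : ℕ) (ε c : ℝ) (hε : 0 < ε) (hc : ε ^ 2 ≤ c) :
    ∃ ρ : EuclideanSpace ℝ (Fin n) → ℝ,
      ContDiff ℝ (⊤ : ℕ∞) ρ ∧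
      (∀ x, ρ x ∈ Set.Icc (0:ℝ) 1) ∧
      Function.support ρ ⊆ Metric.closedBall 0 ε ∧
      ρ 0 = 1 ∧
      (∀ x, fderiv ℝ (fun y => ρ y * (c - ‖y‖ ^ 2)) x = 0 →
        ρ x * (c - ‖x‖ ^ 2) ∈ ({0, c} : Set ℝ)) ∧
      fderiv ℝ (fun y => ρ y * (c - ‖y‖ ^ 2)) 0 = 0 ∧
      ρ 0 * (c - ‖(0 : EuclideanSpace ℝ (Fin n))‖ ^ 2) = c := by
  have hφε : 0 < expNegInvGlue (ε ^ 2) := expNegInvGlue.pos_of_pos (by positivity)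
  have hdiff : Differentiable ℝ expNegInvGlue :=
    (expNegInvGlue.contDiff (n := 1)).differentiable (by norm_num)
  have hg : ∀ x : EuclideanSpace ℝ (Fin n), HasFDerivAt
      (fun y : EuclideanSpace ℝ (Fin n) =>
        expNegInvGlue (ε ^ 2 - ‖y‖ ^ 2) / expNegInvGlue (ε ^ 2) * (c - ‖y‖ ^ 2))
      (((deriv expNegInvGlue (ε ^ 2 - ‖x‖ ^ 2) * (-1)) / expNegInvGlue (ε ^ 2) * (c - ‖x‖ ^ 2)
        + expNegInvGlue (ε ^ 2 - ‖x‖ ^ 2) / expNegInvGlue (ε ^ 2) * (-1)) •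
        (2 • innerSL ℝ x)) x := by
    intro x
    have hH : ∀ u : ℝ, HasDerivAt
        (fun u => expNegInvGlue (ε ^ 2 - u) / expNegInvGlue (ε ^ 2) * (c - u))
        ((deriv expNegInvGlue (ε ^ 2 - u) * (-1)) / expNegInvGlue (ε ^ 2) * (c - u)
          + expNegInvGlue (ε ^ 2 - u) / expNegInvGlue (ε ^ 2) * (-1)) u := by
      intro u
      have h1 : HasDerivAt (fun u => expNegInvGlue (ε ^ 2 - u))
          (deriv expNegInvGlue (ε ^ 2 - u) * (-1)) u :=
        (hdiff (ε ^ 2 - u)).hasDerivAt.comp u ((hasDerivAt_id u).const_sub (ε ^ 2))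
      exact (h1.div_const _).mul ((hasDerivAt_id u).const_sub c)
    exact (hH (‖x‖ ^ 2)).comp_hasFDerivAt x (hasStrictFDerivAt_norm_sq x).hasFDerivAt
  refine ⟨fun x => expNegInvGlue (ε ^ 2 - ‖x‖ ^ 2) / expNegInvGlue (ε ^ 2),
    ?_, ?_, ?_, ?_, ?_, ?_, ?_⟩
  · exact (expNegInvGlue.contDiff.comp (contDiff_const.sub (contDiff_norm_sq ℝ))).div_const _
  · intro x
    refine ⟨div_nonneg (expNegInvGlue.nonneg _) hφε.le, (div_le_one hφε).2 ?_⟩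
    exact expNegInvGlue.monotone (by nlinarith [sq_nonneg ‖x‖])
  · intro x hx
    rw [mem_closedBall_zero_iff]
    by_contra! h
    exact hx (by
      simp only
      rw [expNegInvGlue.zero_of_nonpos (by nlinarith), zero_div])
  · simp [hφε.ne']
  · intro x hx
    rcases le_or_gt (ε ^ 2 - ‖x‖ ^ 2) 0 with hs | hs
    · left
      simp only
      rw [expNegInvGlue.zero_of_nonpos hs, zero_div, zero_mul]
    · right
      have hφ := expNegInvGlue.pos_of_pos hs
      have hd : 0 ≤ deriv expNegInvGlue (ε ^ 2 - ‖x‖ ^ 2) := expNegInvGlue.monotone.deriv_nonneg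
      have hneg : (deriv expNegInvGlue (ε ^ 2 - ‖x‖ ^ 2) * (-1)) / expNegInvGlue (ε ^ 2)
          * (c - ‖x‖ ^ 2)
          + expNegInvGlue (ε ^ 2 - ‖x‖ ^ 2) / expNegInvGlue (ε ^ 2) * (-1) < 0 := by
        have h1 : 0 ≤ deriv expNegInvGlue (ε ^ 2 - ‖x‖ ^ 2) / expNegInvGlue (ε ^ 2)
            * (c - ‖x‖ ^ 2) := mul_nonneg (div_nonneg hd hφε.le) (by linarith)
        have h2 := div_pos hφ hφε
        rw [mul_neg_one, neg_div, neg_mul]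
        linarith
      rw [(hg x).fderiv, smul_eq_zero_iff_right hneg.ne] at hx
      have hx0 : x = 0 := by
        have := congrArg (fun L => L x) hx
        simpa using this
      simp [hx0, hφε.ne']
  · rw [(hg 0).fderiv]
    simp
  · simp [hφε.ne']
end
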